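/- Let n ≥ 1, 0 < m < 1, 0 < s < m, 1/m ≤ p < ∞ and 1/m ≤ r < ∞. For every measurable function f : ℝⁿ → ℝⁿ, one has ( ∫_{ℝⁿ} ‖Δ_y(J_m ∘ f)‖_{L^p(ℝⁿ)}^r |y|^{−sr−n} dy )^{1/r} ≤ 6 ( ∫_{ℝⁿ} ‖Δ_y f‖_{L^{mp}(ℝⁿ)}^{mr} |y|^{−sr−n} dy )^{1/r}, where Δ_y g(x) = g(x+y) − g(x) (the inequality being interpreted in [0,∞]). -/

import Mathlib

/-!
The map `J_m` is `m`-Hölder on all of `ℝⁿ`: `‖J_m a - J_m b‖ ≤ 4 ‖a - b‖ ^ m`. Applied to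
`a = f (x + y)`, `b = f x` this gives `‖Δ_y (J_m ∘ f)‖_{L^p} ≤ 6 ‖Δ_y f‖_{L^{mp}} ^ m` for every
`y`, because `‖|g| ^ m‖_{L^p} = ‖g‖_{L^{mp}} ^ m`. Raising to the power `r` and integrating
against the weight yields the claim.
-/

open MeasureTheory

/-- The nonlinear power `J_m(a) = |a|^{m-1} a` (with `J_m(0) = 0`). -/
noncomputable def Jm (n : ℕ) (m : ℝ) (a : EuclideanSpace ℝ (Fin n)) :
    EuclideanSpace ℝ (Fin n) :=
  ‖a‖ ^ (m - 1) • a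

/-- The Hölder bound when `a` is the longer vector. In the decomposition
`J_m a - J_m b = |a|^{m-1} (a - b) + (|a|^{m-1} - |b|^{m-1}) b` both terms are at most
`|a|^{m-1} |a - b|`, and `|a - b| ≤ 2 |a|` turns this into a multiple of `|a - b|^m`. -/
lemma norm_Jm_sub_le_of_le {n : ℕ} {m : ℝ} (hm0 : 0 < m) (hm1 : m < 1)
    (a b : EuclideanSpace ℝ (Fin n)) (hab : ‖b‖ ≤ ‖a‖) :
    ‖Jm n m a - Jm n m b‖ ≤ 4 * ‖a - b‖ ^ m := by
  by_cases hne : a = b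
  · subst hne
    rw [sub_self, norm_zero]; positivity
  have hd : 0 < ‖a - b‖ := norm_pos_iff.2 (sub_ne_zero.2 hne)
  have hd2 : ‖a - b‖ ≤ 2 * ‖a‖ := by linarith [norm_sub_le a b]
  have ha : 0 < ‖a‖ := by linarith
  have hpow : ∀ t : ℝ, 0 ≤ t → t ^ (m - 1) * t = t ^ m := by
    intro t ht
    rcases ht.eq_or_lt with rfl | ht
    · simp [Real.zero_rpow hm0.ne']
    · rw [← Real.rpow_add_one ht.ne', sub_add_cancel]
  have hsecond : ‖(‖a‖ ^ (m - 1) - ‖b‖ ^ (m - 1)) • b‖ ≤ ‖a‖ ^ (m - 1) * ‖a - b‖ := by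
    rcases eq_or_ne b 0 with rfl | hb
    · simp only [smul_zero, norm_zero]; positivity
    have hb' : 0 < ‖b‖ := norm_pos_iff.2 hb
    have hanti : ‖a‖ ^ (m - 1) ≤ ‖b‖ ^ (m - 1) :=
      Real.rpow_le_rpow_of_nonpos hb' hab (by linarith)
    rw [norm_smul, Real.norm_eq_abs, abs_of_nonpos (by linarith)]
    have h1 : ‖b‖ ^ m ≤ ‖a‖ ^ m := Real.rpow_le_rpow hb'.le hab hm0.le
    have h2 : ‖a‖ ^ (m - 1) * (‖a‖ - ‖b‖) ≤ ‖a‖ ^ (m - 1) * ‖a - b‖ :=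
      mul_le_mul_of_nonneg_left (norm_sub_norm_le a b) (by positivity)
    have h3 := hpow _ ha.le
    have h4 := hpow _ hb'.le
    linarith
  have hfactor : ‖a‖ ^ (m - 1) ≤ 2 * ‖a - b‖ ^ (m - 1) := by
    have h1 : ‖a‖ ^ (m - 1) ≤ (‖a - b‖ / 2) ^ (m - 1) :=
      Real.rpow_le_rpow_of_nonpos (by positivity) (by linarith) (by linarith)
    have h2 : (‖a - b‖ / 2) ^ (m - 1) = ‖a - b‖ ^ (m - 1) * 2 ^ (1 - m) := by
      rw [Real.div_rpow hd.le (by norm_num), div_eq_mul_inv,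
        ← Real.rpow_neg (by norm_num), neg_sub]
    have h3 : (2 : ℝ) ^ (1 - m) ≤ 2 := by
      simpa using Real.rpow_le_rpow_of_exponent_le (x := 2) (by norm_num)
        (show 1 - m ≤ 1 by linarith)
    have h4 : ‖a - b‖ ^ (m - 1) * 2 ^ (1 - m) ≤ ‖a - b‖ ^ (m - 1) * 2 :=
      mul_le_mul_of_nonneg_left h3 (by positivity)
    linarith
  have hdec : Jm n m a - Jm n m b
      = ‖a‖ ^ (m - 1) • (a - b) + (‖a‖ ^ (m - 1) - ‖b‖ ^ (m - 1)) • b := by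
    simp only [Jm]; module
  calc ‖Jm n m a - Jm n m b‖
      ≤ ‖‖a‖ ^ (m - 1) • (a - b)‖ + ‖(‖a‖ ^ (m - 1) - ‖b‖ ^ (m - 1)) • b‖ := by
        rw [hdec]; exact norm_add_le _ _
    _ ≤ ‖a‖ ^ (m - 1) * ‖a - b‖ + ‖a‖ ^ (m - 1) * ‖a - b‖ := by
        refine add_le_add (le_of_eq ?_) hsecond
        rw [norm_smul, Real.norm_eq_abs, abs_of_nonneg (by positivity)]
    _ ≤ 4 * (‖a - b‖ ^ (m - 1) * ‖a - b‖) := by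
        nlinarith [mul_le_mul_of_nonneg_right hfactor hd.le]
    _ = 4 * ‖a - b‖ ^ m := by rw [hpow _ hd.le]

lemma norm_Jm_sub_le {n : ℕ} {m : ℝ} (hm0 : 0 < m) (hm1 : m < 1)
    (a b : EuclideanSpace ℝ (Fin n)) :
    ‖Jm n m a - Jm n m b‖ ≤ 4 * ‖a - b‖ ^ m := by
  rcases le_total ‖b‖ ‖a‖ with h | h
  · exact norm_Jm_sub_le_of_le hm0 hm1 a b h
  · rw [norm_sub_rev, norm_sub_rev a b]
    exact norm_Jm_sub_le_of_le hm0 hm1 b a h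

theorem besov_seminorm_Jm_comp_le (n : ℕ) (hn : 1 ≤ n) (m s p r : ℝ)
    (hm0 : 0 < m) (hm1 : m < 1) (hs0 : 0 < s) (hsm : s < m)
    (hp : 1 / m ≤ p) (hr : 1 / m ≤ r)
    (f : EuclideanSpace ℝ (Fin n) → EuclideanSpace ℝ (Fin n)) (hf : Measurable f) :
    (∫⁻ y : EuclideanSpace ℝ (Fin n),
        eLpNorm (fun x => Jm n m (f (x + y)) - Jm n m (f x)) (ENNReal.ofReal p) volume ^ r
          * ENNReal.ofReal (‖y‖ ^ (-(s * r) - (n : ℝ)))) ^ (1 / r)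
      ≤ 6 * (∫⁻ y : EuclideanSpace ℝ (Fin n),
          eLpNorm (fun x => f (x + y) - f x) (ENNReal.ofReal (m * p)) volume ^ (m * r)
            * ENNReal.ofReal (‖y‖ ^ (-(s * r) - (n : ℝ)))) ^ (1 / r) := by
  have hr0 : 0 < r := lt_of_lt_of_le (by positivity) hr
  have hnorm : ∀ y : EuclideanSpace ℝ (Fin n),
      eLpNorm (fun x => Jm n m (f (x + y)) - Jm n m (f x)) (ENNReal.ofReal p) volume
        ≤ 6 * eLpNorm (fun x => f (x + y) - f x) (ENNReal.ofReal (m * p)) volume ^ m := by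
    intro y
    have h := eLpNorm_le_mul_eLpNorm_of_ae_le_mul (μ := volume) (c := 6)
      (f := fun x => Jm n m (f (x + y)) - Jm n m (f x))
      (g := fun x => ‖f (x + y) - f x‖ ^ m)
      (Filter.Eventually.of_forall fun x => by
        rw [Real.norm_of_nonneg (by positivity)]
        have h1 := norm_Jm_sub_le hm0 hm1 (f (x + y)) (f x)
        have h2 : 0 ≤ ‖f (x + y) - f x‖ ^ m := by positivity
        linarith) (ENNReal.ofReal p)
    rwa [eLpNorm_norm_rpow _ hm0, ← ENNReal.ofReal_mul' hm0.le, mul_comm p m,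
      ENNReal.ofReal_ofNat] at h
  have hint : (∫⁻ y : EuclideanSpace ℝ (Fin n),
        eLpNorm (fun x => Jm n m (f (x + y)) - Jm n m (f x)) (ENNReal.ofReal p) volume ^ r
          * ENNReal.ofReal (‖y‖ ^ (-(s * r) - (n : ℝ))))
      ≤ 6 ^ r * ∫⁻ y : EuclideanSpace ℝ (Fin n),
          eLpNorm (fun x => f (x + y) - f x) (ENNReal.ofReal (m * p)) volume ^ (m * r)
            * ENNReal.ofReal (‖y‖ ^ (-(s * r) - (n : ℝ))) := by
    rw [← lintegral_const_mul' _ _ (ENNReal.rpow_ne_top_of_nonneg hr0.le (by norm_num))]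
    refine lintegral_mono fun y => ?_
    rw [← mul_assoc, ENNReal.rpow_mul, ← ENNReal.mul_rpow_of_nonneg _ _ hr0.le]
    gcongr
    exact hnorm y
  calc _ ≤ _ := ENNReal.rpow_le_rpow hint (by positivity)
    _ = _ := by
      rw [ENNReal.mul_rpow_of_nonneg _ _ (by positivity), ← ENNReal.rpow_mul,
        mul_one_div_cancel hr0.ne', ENNReal.rpow_one]
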